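/- Assume: P0 is an algebraic null hypothesis (P0 = Δ_{k-1} ∩ {π : g(π)=0 for all g ∈ G} with ∅ ≠ P0 ≠ Δ_{k-1}) with projection P̃0 ⊆ Δ̃_{k-1}; the closure of int(Δ̃_{k-1}) ∩ P̃0 equals P̃0; the vanishing ideal I(P̃0) ⊆ MvPolynomial (Fin (k−1)) ℝ is the principal ideal generated by a single polynomial f; and the gradient of f is nonzero at every point of P̃0. Let D = 2·totalDegree(f). Then: (i) for every n < D there is no NTUB test of P0 of sample size n, and there exists an SUB test of P0 of sample size D (so the NTUB and SUB unbiasedness thresholds both equal D); (ii) for every α ∈ (0,1), the set of c > 0 such that the function π ↦ c·f(π_1,…,π_{k-1})² + α on Δ_{k-1} equals the power function of some test of sample size D is nonempty and has a greatest element c_α; every NTUB test of P0 of sample size D with size α has power function π ↦ c·f(π_1,…,π_{k-1})² + α on Δ_{k-1} for some c ∈ (0, c_α]; and the test whose power function equals c_α·f(π_1,…,π_{k-1})² + α on Δ_{k-1} is strictly unbiased and is the unique UMPU level-α test of sample size D. -/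

import Mathlib

open Finset

/-- The probability simplex on a finite index set `ι`. -/
def probSimplex (ι : Type) [Fintype ι] : Set (ι → ℝ) :=
  {π | (∀ i, 0 ≤ π i) ∧ ∑ i, π i = 1}

/-- Count vectors of sample size `n`: functions `x : ι → ℕ` with `∑ i, x i = n`. -/
def countVecs (ι : Type) [Fintype ι] [DecidableEq ι] (n : ℕ) : Finset (ι → ℕ) :=
  (Fintype.piFinset fun _ : ι => Finset.range (n + 1)).filter fun x => ∑ i, x i = n

/-- A (randomized) test of sample size `n`: values in `[0,1]` on all count vectors. -/
def IsTest (ι : Type) [Fintype ι] [DecidableEq ι] (n : ℕ) (φ : (ι → ℕ) → ℝ) : Prop :=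
  ∀ x ∈ countVecs ι n, 0 ≤ φ x ∧ φ x ≤ 1

/-- The power function of a test. -/
noncomputable def powerFn (ι : Type) [Fintype ι] [DecidableEq ι] (n : ℕ)
    (φ : (ι → ℕ) → ℝ) (π : ι → ℝ) : ℝ :=
  ∑ x ∈ countVecs ι n, φ x * (Nat.multinomial Finset.univ x : ℝ) * ∏ i, π i ^ x i

/-- Unbiasedness relative to the null hypothesis `P0`. -/
def Unbiased (ι : Type) [Fintype ι] [DecidableEq ι] (n : ℕ) (P0 : Set (ι → ℝ))
    (φ : (ι → ℕ) → ℝ) : Prop :=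
  ∀ π0 ∈ P0, ∀ πA ∈ probSimplex ι \ P0, powerFn ι n φ π0 ≤ powerFn ι n φ πA

/-- Non-trivial unbiased test: unbiased with non-constant power on the simplex. -/
def IsNTUB (ι : Type) [Fintype ι] [DecidableEq ι] (n : ℕ) (P0 : Set (ι → ℝ))
    (φ : (ι → ℕ) → ℝ) : Prop :=
  Unbiased ι n P0 φ ∧
    ∃ π ∈ probSimplex ι, ∃ π' ∈ probSimplex ι, powerFn ι n φ π ≠ powerFn ι n φ π'

/-- Strictly unbiased test. -/
def IsSUB (ι : Type) [Fintype ι] [DecidableEq ι] (n : ℕ) (P0 : Set (ι → ℝ))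
    (φ : (ι → ℕ) → ℝ) : Prop :=
  ∀ π0 ∈ P0, ∀ πA ∈ probSimplex ι \ P0, powerFn ι n φ π0 < powerFn ι n φ πA

/-- Level-`α` test. -/
def IsLevel (ι : Type) [Fintype ι] [DecidableEq ι] (n : ℕ) (P0 : Set (ι → ℝ)) (α : ℝ)
    (φ : (ι → ℕ) → ℝ) : Prop :=
  ∀ π ∈ P0, powerFn ι n φ π ≤ α

/-- A test has size `α` if the supremum of its power over `P0` is `α`. -/
def HasSize (ι : Type) [Fintype ι] [DecidableEq ι] (n : ℕ) (P0 : Set (ι → ℝ)) (α : ℝ)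
    (φ : (ι → ℕ) → ℝ) : Prop :=
  IsLUB (powerFn ι n φ '' P0) α

/-- Uniformly most powerful unbiased level-`α` test. -/
def IsUMPU (ι : Type) [Fintype ι] [DecidableEq ι] (n : ℕ) (P0 : Set (ι → ℝ)) (α : ℝ)
    (φ : (ι → ℕ) → ℝ) : Prop :=
  IsLevel ι n P0 α φ ∧ Unbiased ι n P0 φ ∧
    ∀ ψ, IsTest ι n ψ → IsLevel ι n P0 α ψ → Unbiased ι n P0 ψ →
      ∀ πA ∈ probSimplex ι \ P0, powerFn ι n ψ πA ≤ powerFn ι n φ πA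

/-- The projected simplex in `ℝ^(k-1)`. -/
def projSimplex (k : ℕ) : Set (Fin (k - 1) → ℝ) :=
  {π' | (∀ i, 0 ≤ π' i) ∧ ∑ i, π' i ≤ 1}

/-- Identify `π' ∈ Δ̃_{k-1}` with `(π'_1, …, π'_{k-1}, 1 - ∑ i, π' i) ∈ Δ_{k-1}`. -/
def liftProj (k : ℕ) (π' : Fin (k - 1) → ℝ) : Fin k → ℝ :=
  fun i => if h : (i : ℕ) < k - 1 then π' ⟨(i : ℕ), h⟩ else 1 - ∑ j, π' j

/-- Projection of a point of `Δ_{k-1}` onto its first `k-1` coordinates. -/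
def projPoint (k : ℕ) (π : Fin k → ℝ) : Fin (k - 1) → ℝ :=
  fun j => π (Fin.castLE (Nat.sub_le k 1) j)

/-!
The power function of a test of sample size `n` is a polynomial of degree at most `n` on the
projected simplex. Null points are limits of alternatives, so the power of an unbiased test is
constant, say `a`, on the null hypothesis and minimal there; hence at interior null points all its
partial derivatives vanish. Writing power `- a = f * h`, this says that `f` divides `h * ∂ᵢ f` for
every `i`. The generator `f` of a vanishing ideal is squarefree, and comparing irreducible factors
gives `f ∣ h`: power `- a` is a multiple of `f ^ 2`. It therefore vanishes when
`n < 2 * deg f`, and equals `c * f ^ 2` when `n = 2 * deg f`.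

Conversely, homogenizing with `∑ i, π i = 1` shows that every polynomial of degree at most `n` is a
combination of multinomial probabilities, in a unique way, so that `c * f ^ 2 + α` is a power
function exactly for `c` in a compact interval, whose right end yields the UMPU test.
-/

section Polynomial

open MvPolynomial Topology

variable {σ : Type*}

theorem eval_smul_of_isHomogeneous {R : Type*} [CommSemiring R] {p : MvPolynomial σ R} {n : ℕ}
    (hp : p.IsHomogeneous n) (r : R) (z : σ → R) : eval (r • z) p = r ^ n * eval z p := by
  rw [eval_eq, eval_eq, mul_sum]
  refine sum_congr rfl fun d hd => ?_
  have hdeg : ∑ i ∈ d.support, d i = n := (hp.degree_eq_sum_deg_support hd).symm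
  simp only [Pi.smul_apply, smul_eq_mul, mul_pow, prod_mul_distrib, prod_pow_eq_pow_sum, hdeg]
  rw [mul_left_comm]

theorem totalDegree_aeval_le {τ R : Type*} [CommSemiring R] {L : σ → MvPolynomial τ R} {d : ℕ}
    (hL : ∀ i, (L i).totalDegree ≤ d) (p : MvPolynomial σ R) :
    (aeval L p).totalDegree ≤ p.totalDegree * d := by
  rw [aeval_def, eval₂_eq]
  refine totalDegree_finsetSum_le fun s hs => ?_
  calc (algebraMap R _ (coeff s p) * ∏ i ∈ s.support, L i ^ s i).totalDegree
      ≤ 0 + ∑ i ∈ s.support, s i * d := by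
        refine (totalDegree_mul _ _).trans (add_le_add (totalDegree_C _).le ?_)
        refine (totalDegree_finsetProd _ _).trans (sum_le_sum fun i _ => ?_)
        exact (totalDegree_pow _ _).trans (Nat.mul_le_mul_left _ (hL i))
    _ ≤ p.totalDegree * d := by
        rw [zero_add, ← sum_mul]
        exact Nat.mul_le_mul_right _ (le_totalDegree hs)

theorem mul_eq_zero_of_totalDegree_mul_lt {R : Type*} [CommRing R] [IsDomain R]
    {p q : MvPolynomial σ R} (h : (p * q).totalDegree < p.totalDegree) : p * q = 0 :=
  by_contra fun h0 => h.not_ge (totalDegree_le_of_dvd_of_isDomain (dvd_mul_right p q) h0)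

theorem exists_mul_eq_C_mul_of_totalDegree_mul_le {R : Type*} [CommRing R] [IsDomain R]
    {p q : MvPolynomial σ R} (h : (p * q).totalDegree ≤ p.totalDegree) : ∃ c, p * q = C c * p := by
  by_cases h0 : p * q = 0
  · exact ⟨0, by simp [h0]⟩
  · rw [totalDegree_mul_of_isDomain (left_ne_zero_of_mul h0) (right_ne_zero_of_mul h0)] at h
    have hq : q.totalDegree = 0 := by lia
    exact ⟨coeff 0 q, by rw [mul_comm, ← totalDegree_eq_zero_iff_eq_C.1 hq]⟩

theorem totalDegree_sq {R : Type*} [CommRing R] [IsDomain R] (p : MvPolynomial σ R) :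
    (p ^ 2).totalDegree = 2 * p.totalDegree := by
  rcases eq_or_ne p 0 with rfl | hp
  · simp
  · rw [sq, totalDegree_mul_of_isDomain hp hp, two_mul]

theorem totalDegree_pderiv_lt {R : Type*} [CommSemiring R] {p : MvPolynomial σ R} {i : σ}
    (hp : pderiv i p ≠ 0) : (pderiv i p).totalDegree < p.totalDegree := by
  obtain ⟨m, hm, hdeg⟩ := exists_mem_eq_sup _ (support_nonempty.2 hp) fun s => s.sum fun _ e => e
  have hm' : m + Finsupp.single i 1 ∈ p.support := by
    rw [mem_support_iff, coeff_pderiv] at hm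
    exact mem_support_iff.2 (left_ne_zero_of_mul hm)
  have hle := le_totalDegree hm'
  rw [Finsupp.sum_add_index' (fun _ => rfl) (fun _ _ _ => rfl),
    Finsupp.sum_single_index rfl] at hle
  exact (Nat.lt_of_succ_le hle).trans_le' hdeg.le

theorem totalDegree_eq_zero_of_forall_pderiv_eq_zero {R : Type*} [CommSemiring R]
    [NoZeroDivisors R] [CharZero R] {p : MvPolynomial σ R} (hp : ∀ i, pderiv i p = 0) :
    p.totalDegree = 0 := by
  refine (MvPolynomial.totalDegree_eq_zero_iff _ _).2 fun m hm i => by_contra fun hmi => ?_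
  have hcoeff := coeff_pderiv (i := i) p (m - Finsupp.single i 1)
  rw [tsub_add_cancel_of_le (Finsupp.single_le_iff.2 (Nat.one_le_iff_ne_zero.2 hmi)), hp i,
    coeff_zero] at hcoeff
  exact mul_ne_zero (mem_support_iff.1 hm) (Nat.cast_add_one_ne_zero _) hcoeff.symm

theorem exists_not_dvd_pderiv_of_irreducible {K : Type*} [Field K] [CharZero K]
    {p : MvPolynomial σ K} (hp : Irreducible p) : ∃ i, ¬ p ∣ pderiv i p := by
  by_contra! hdvd
  have hzero (i : σ) : pderiv i p = 0 := by_contra fun hi =>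
    (totalDegree_pderiv_lt hi).not_ge (totalDegree_le_of_dvd_of_isDomain (hdvd i) hi)
  have hdeg := totalDegree_eq_zero_of_forall_pderiv_eq_zero hzero
  have hC := totalDegree_eq_zero_iff_eq_C.1 hdeg
  have hcoeff : coeff 0 p ≠ 0 := fun h => hp.ne_zero (by rw [hC, h, C_0])
  exact hp.not_isUnit (isUnit_iff_totalDegree_of_isReduced.2 ⟨hcoeff.isUnit, hdeg⟩)

theorem dvd_of_squarefree_of_forall_dvd_mul_pderiv {K : Type*} [Field K] [CharZero K]
    {f h : MvPolynomial σ K} (hf : Squarefree f) (hdvd : ∀ i, f ∣ h * pderiv i f) : f ∣ h := by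
  induction f using WfDvdMonoid.induction_on_irreducible with
  | zero => exact absurd hf not_squarefree_zero
  | unit u hu => exact hu.dvd
  | mul e p _ hp ih =>
    obtain ⟨hpe, -, he⟩ := squarefree_mul_iff.1 hf
    have hpe : ¬ p ∣ e := fun hpe' => hp.not_isUnit (hpe dvd_rfl hpe')
    have hleibniz (i : σ) : p * e ∣ h * (pderiv i p * e) + h * (p * pderiv i e) := by
      rw [← mul_add, ← pderiv_mul]
      exact hdvd i
    have hph : p ∣ h := by
      obtain ⟨i, hi⟩ := exists_not_dvd_pderiv_of_irreducible hp
      have : p ∣ h * (pderiv i p * e) :=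
        (dvd_add_left (dvd_mul_of_dvd_right (dvd_mul_right _ _) _)).1
          (dvd_of_mul_right_dvd (hleibniz i))
      exact (hp.prime.dvd_or_dvd this).resolve_right (hp.prime.not_dvd_mul hi hpe)
    have heh : e ∣ h := ih he fun i => by
      obtain ⟨h', rfl⟩ := hph
      have : p * e ∣ p * h' * (p * pderiv i e) :=
        (dvd_add_right ⟨h' * pderiv i p, by ring⟩).1 (hleibniz i)
      rw [mul_left_comm (p * h')] at this
      exact (mul_dvd_mul_iff_left hp.ne_zero).1 this
    obtain ⟨c, rfl⟩ := heh
    rw [mul_comm p e]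
    exact mul_dvd_mul_left e ((hp.prime.dvd_or_dvd hph).resolve_left hpe)

theorem vanishingIdeal_inter_eq_span {K : Type*} [Field K] {U Z : Set (σ → K)}
    {f : MvPolynomial σ K}
    (hdense : ∀ h, (∀ z ∈ U ∩ Z, eval z h = 0) → ∀ z ∈ Z, eval z h = 0)
    (hprincipal : ∀ h, (∀ z ∈ Z, eval z h = 0) ↔ h ∈ Ideal.span {f}) :
    vanishingIdeal K (U ∩ Z) = Ideal.span {f} := by
  ext h
  rw [mem_vanishingIdeal_iff, ← hprincipal]
  exact ⟨hdense h, fun hh z hz => hh z hz.2⟩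

theorem squarefree_of_vanishingIdeal_eq_span {K : Type*} [Field K] {Z : Set (σ → K)}
    {f : MvPolynomial σ K} (hf0 : f ≠ 0) (hf : vanishingIdeal K Z = Ideal.span {f}) :
    Squarefree f := by
  refine IsRadical.squarefree hf0 fun n h hdvd => ?_
  rw [← Ideal.mem_span_singleton, ← hf, mem_vanishingIdeal_iff] at hdvd ⊢
  exact fun z hz => eq_zero_of_pow_eq_zero ((map_pow _ _ _).symm.trans (hdvd z hz))

theorem hasDerivAt_eval_update [DecidableEq σ] (p : MvPolynomial σ ℝ) (z : σ → ℝ) (i : σ) (t : ℝ) :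
    HasDerivAt (fun t => eval (Function.update z i t) p)
      (eval (Function.update z i t) (pderiv i p)) t := by
  induction p using MvPolynomial.induction_on with
  | C a => simpa only [eval_C, pderiv_C, map_zero] using hasDerivAt_const t a
  | add p q hp hq => simpa only [map_add] using hp.fun_add hq
  | mul_X p j hp =>
    have hX : HasDerivAt (fun t => Function.update z i t j)
        (eval (Function.update z i t) (pderiv i (X j))) t := by
      rcases eq_or_ne j i with rfl | hji
      · simpa using hasDerivAt_id' t
      · simpa [hji, pderiv_X_of_ne hji] using hasDerivAt_const t (z j)
    simpa only [pderiv_mul, map_add, map_mul, eval_X] using hp.fun_mul hX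

theorem eval_pderiv_eq_zero_of_isLocalMin {p : MvPolynomial σ ℝ} {z : σ → ℝ}
    (hz : IsLocalMin (fun y => eval y p) z) (i : σ) : eval z (pderiv i p) = 0 := by
  classical
  have hupdate : Filter.Tendsto (Function.update z i) (𝓝 (z i)) (𝓝 z) :=
    (continuous_const.update i continuous_id).tendsto' _ _ (Function.update_eq_self i z)
  have hmin : IsLocalMin (fun t => eval (Function.update z i t) p) (z i) :=
    IsMinFilter.comp_tendsto (f := fun y => eval y p) (g := Function.update z i)
      ((Function.update_eq_self i z).symm ▸ hz) hupdate
  simpa using hmin.hasDerivAt_eq_zero (hasDerivAt_eval_update p z i (z i))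

theorem sq_dvd_sub_C_of_isLocalMin {Z : Set (σ → ℝ)} {f p : MvPolynomial σ ℝ} {a : ℝ}
    (hf : vanishingIdeal ℝ Z = Ideal.span {f}) (hmin : ∀ z ∈ Z, IsLocalMin (fun y => eval y p) z)
    (ha : ∀ z ∈ Z, eval z p = a) : f ^ 2 ∣ p - C a := by
  have dvd_iff (h : MvPolynomial σ ℝ) : f ∣ h ↔ ∀ z ∈ Z, eval z h = 0 := by
    rw [← Ideal.mem_span_singleton, ← hf]
    rfl
  obtain ⟨h, hh⟩ := (dvd_iff (p - C a)).2 fun z hz => by simp [ha z hz]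
  rcases eq_or_ne f 0 with rfl | hf0
  · simp [hh]
  have hderiv (i : σ) : f ∣ h * pderiv i f := (dvd_iff _).2 fun z hz => by
    have hp : pderiv i p = pderiv i f * h + f * pderiv i h := by
      rw [← pderiv_mul, ← hh, map_sub, pderiv_C, sub_zero]
    have hfz : eval z f = 0 := (dvd_iff f).1 dvd_rfl z hz
    have := eval_pderiv_eq_zero_of_isLocalMin (hmin z hz) i
    rwa [hp, map_add, map_mul, map_mul, hfz, zero_mul, add_zero, mul_comm, ← map_mul] at this
  rw [hh, sq]
  exact mul_dvd_mul_left f (dvd_of_squarefree_of_forall_dvd_mul_pderiv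
    (squarefree_of_vanishingIdeal_eq_span hf0 hf) hderiv)

theorem eval_eq_zero_of_mem_closure {Z : Set (σ → ℝ)} {p : MvPolynomial σ ℝ}
    (hp : ∀ z ∈ Z, eval z p = 0) {z : σ → ℝ} (hz : z ∈ closure Z) : eval z p = 0 :=
  closure_minimal hp (isClosed_eq (continuous_eval p) continuous_const) hz

theorem convex_subset_closure_eval_ne_zero {K : Set (σ → ℝ)} (hK : Convex ℝ K) {w : σ → ℝ}
    (hw : w ∈ K) {p : MvPolynomial σ ℝ} (hp : eval w p ≠ 0) :
    K ⊆ closure {z ∈ K | eval z p ≠ 0} := by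
  intro z hz
  let q : Polynomial ℝ :=
    aeval (fun i => Polynomial.C (z i) + Polynomial.X * Polynomial.C (w i - z i)) p
  have hq (t : ℝ) : q.eval t = eval (AffineMap.lineMap z w t) p := by
    rw [← Polynomial.coe_aeval_eq_eval, comp_aeval_apply, aeval_eq_eval]
    congr 2 with i
    simp [AffineMap.lineMap_apply, add_comm]
  have hq0 : q ≠ 0 := fun h => hp (by simpa [h] using (hq 1).symm)
  have hroots : ∀ᶠ t in 𝓝[≠] (0 : ℝ), q.eval t ≠ 0 :=
    nhdsNE_le_cofinite 0 (Polynomial.finite_setOfPred_isRoot hq0).eventually_cofinite_notMem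
  have htendsto : Filter.Tendsto (AffineMap.lineMap (k := ℝ) z w) (𝓝[>] 0) (𝓝 z) := by
    have hcont : Continuous (AffineMap.lineMap (k := ℝ) z w) := AffineMap.lineMap_continuous
    exact (hcont.tendsto' 0 z (AffineMap.lineMap_apply_zero z w)).mono_left nhdsWithin_le_nhds
  refine mem_closure_of_tendsto htendsto ?_
  filter_upwards [nhdsGT_le_nhdsNE _ hroots, Ioc_mem_nhdsGT one_pos] with t hroot ht
  exact ⟨hK.lineMap_mem hz hw ⟨ht.1.le, ht.2⟩, hq t ▸ hroot⟩

end Polynomial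

section PowerFunction

open MvPolynomial

variable {ι : Type} [Fintype ι]

theorem exists_isHomogeneous_eval_eq_on_probSimplex {q : MvPolynomial ι ℝ} {n : ℕ}
    (hq : q.totalDegree ≤ n) :
    ∃ Q : MvPolynomial ι ℝ, Q.IsHomogeneous n ∧ ∀ π ∈ probSimplex ι, eval π Q = eval π q := by
  refine ⟨∑ j ∈ range (q.totalDegree + 1), homogeneousComponent j q * (∑ i, X i) ^ (n - j),
    IsHomogeneous.sum _ _ _ fun j hj => ?_, fun π hπ => ?_⟩
  · have hsum : (∑ i, X i : MvPolynomial ι ℝ).IsHomogeneous 1 :=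
      IsHomogeneous.sum _ _ _ fun i _ => isHomogeneous_X ℝ i
    have hjn : j + 1 * (n - j) = n := by grind
    simpa only [hjn] using (homogeneousComponent_isHomogeneous j q).mul (hsum.pow (n - j))
  · conv_rhs => rw [← sum_homogeneousComponent q]
    simp only [map_sum, map_mul, map_pow, eval_X, hπ.2, one_pow, mul_one]

theorem eq_zero_of_isHomogeneous_of_eval_eq_zero_on_probSimplex [Nonempty ι]
    {q : MvPolynomial ι ℝ} {n : ℕ} (hq : q.IsHomogeneous n)
    (hzero : ∀ π ∈ probSimplex ι, eval π q = 0) : q = 0 := by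
  refine funext_set (fun _ => Set.Ioi 0) (fun _ => Set.Ioi_infinite 0) fun z hz => ?_
  have hz' (i : ι) : 0 < z i := hz i (Set.mem_univ i)
  have hsum : 0 < ∑ i, z i := sum_pos (fun i _ => hz' i) univ_nonempty
  have hmem : (∑ i, z i)⁻¹ • z ∈ probSimplex ι :=
    ⟨fun i => mul_nonneg (inv_nonneg.2 hsum.le) (hz' i).le, by
      simp only [Pi.smul_apply, smul_eq_mul, ← mul_sum, inv_mul_cancel₀ hsum.ne']⟩
  have hscaled := hzero _ hmem
  rw [eval_smul_of_isHomogeneous hq] at hscaled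
  rw [map_zero]
  exact (mul_eq_zero.1 hscaled).resolve_left (pow_ne_zero n (inv_ne_zero hsum.ne'))

variable [DecidableEq ι] {n : ℕ} {φ ψ : (ι → ℕ) → ℝ} {π : ι → ℝ}

theorem countVecs_eq_piAntidiag (ι : Type) [Fintype ι] [DecidableEq ι] (n : ℕ) :
    countVecs ι n = univ.piAntidiag n := by
  ext x
  simp only [countVecs, mem_filter, Fintype.mem_piFinset, mem_range, mem_piAntidiag, mem_univ,
    implies_true, and_true, and_iff_right_iff_imp]
  rintro rfl i
  exact Nat.lt_succ_of_le (single_le_sum_of_canonicallyOrdered (mem_univ i))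

theorem coe_mem_countVecs {d : ι →₀ ℕ} : ⇑d ∈ countVecs ι n ↔ d.degree = n := by
  simp [countVecs_eq_piAntidiag, Finsupp.degree_eq_sum]

/-- The homogeneous polynomial of degree `n` whose evaluation is the power function of `φ`. -/
noncomputable def powerPoly (ι : Type) [Fintype ι] [DecidableEq ι] (n : ℕ) (φ : (ι → ℕ) → ℝ) :
    MvPolynomial ι ℝ :=
  ∑ x ∈ countVecs ι n,
    monomial (Finsupp.equivFunOnFinite.symm x) (φ x * (Nat.multinomial univ x : ℝ))

theorem eval_powerPoly (φ : (ι → ℕ) → ℝ) (π : ι → ℝ) :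
    eval π (powerPoly ι n φ) = powerFn ι n φ π := by
  simp only [powerPoly, powerFn, map_sum, eval_monomial,
    Finsupp.prod_fintype _ _ fun _ => pow_zero _, Finsupp.equivFunOnFinite_symm_apply_apply]

theorem coeff_powerPoly (φ : (ι → ℕ) → ℝ) (d : ι →₀ ℕ) :
    coeff d (powerPoly ι n φ) = if d.degree = n then φ d * (Nat.multinomial univ d : ℝ) else 0 := by
  simp only [powerPoly, coeff_sum, coeff_monomial, Equiv.symm_apply_eq, sum_ite_eq',
    ← coe_mem_countVecs]
  rfl

theorem isHomogeneous_powerPoly (φ : (ι → ℕ) → ℝ) : (powerPoly ι n φ).IsHomogeneous n :=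
  IsHomogeneous.sum _ _ _ fun _ hx => isHomogeneous_monomial _ (coe_mem_countVecs.1 hx)

theorem exists_powerPoly_eq {q : MvPolynomial ι ℝ} (hq : q.IsHomogeneous n) :
    ∃ a, powerPoly ι n a = q := by
  refine ⟨fun x => coeff (Finsupp.equivFunOnFinite.symm x) q / Nat.multinomial univ x, ?_⟩
  ext d
  rw [coeff_powerPoly]
  split_ifs with hd
  · rw [div_mul_cancel₀ _ (Nat.cast_ne_zero.2 (Nat.multinomial_pos _ _).ne')]
    simp
  · exact (hq.coeff_eq_zero hd).symm

theorem exists_powerFn_eq_eval {q : MvPolynomial ι ℝ} (hq : q.totalDegree ≤ n) :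
    ∃ a, ∀ π ∈ probSimplex ι, powerFn ι n a π = eval π q := by
  obtain ⟨Q, hQ, hQq⟩ := exists_isHomogeneous_eval_eq_on_probSimplex hq
  obtain ⟨a, rfl⟩ := exists_powerPoly_eq hQ
  exact ⟨a, fun π hπ => by rw [← eval_powerPoly, hQq π hπ]⟩

theorem eqOn_countVecs_of_powerFn_eq [Nonempty ι]
    (h : ∀ π ∈ probSimplex ι, powerFn ι n φ π = powerFn ι n ψ π) :
    ∀ x ∈ countVecs ι n, φ x = ψ x := by
  have hpoly : powerPoly ι n φ = powerPoly ι n ψ := sub_eq_zero.1 <|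
    eq_zero_of_isHomogeneous_of_eval_eq_zero_on_probSimplex
      ((isHomogeneous_powerPoly φ).sub (isHomogeneous_powerPoly ψ)) fun π hπ => by
        rw [map_sub, eval_powerPoly, eval_powerPoly, h π hπ, sub_self]
  intro x hx
  have hdeg : (Finsupp.equivFunOnFinite.symm x).degree = n := coe_mem_countVecs.1 hx
  have hcoeff := congrArg (coeff (Finsupp.equivFunOnFinite.symm x)) hpoly
  rw [coeff_powerPoly, coeff_powerPoly, if_pos hdeg, if_pos hdeg] at hcoeff
  exact mul_right_cancel₀ (Nat.cast_ne_zero.2 (Nat.multinomial_pos _ _).ne') hcoeff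

theorem continuous_powerFn (φ : (ι → ℕ) → ℝ) : Continuous (powerFn ι n φ) := by
  unfold powerFn
  fun_prop

theorem powerFn_mul_add_const (r s : ℝ) (φ : (ι → ℕ) → ℝ) (hπ : π ∈ probSimplex ι) :
    powerFn ι n (fun x => r * φ x + s) π = r * powerFn ι n φ π + s := by
  have htotal : ∑ x ∈ countVecs ι n, (Nat.multinomial univ x : ℝ) * ∏ i, π i ^ x i = 1 := by
    rw [countVecs_eq_piAntidiag, ← sum_pow_eq_sum_piAntidiag univ π n, hπ.2, one_pow]
  calc powerFn ι n (fun x => r * φ x + s) π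
      = r * powerFn ι n φ π
        + s * ∑ x ∈ countVecs ι n, (Nat.multinomial univ x : ℝ) * ∏ i, π i ^ x i := by
        simp only [powerFn, mul_sum, ← sum_add_distrib]
        exact sum_congr rfl fun x _ => by ring
    _ = r * powerFn ι n φ π + s := by rw [htotal, mul_one]

theorem powerFn_mono (h : ∀ x ∈ countVecs ι n, φ x ≤ ψ x) (hπ : π ∈ probSimplex ι) :
    powerFn ι n φ π ≤ powerFn ι n ψ π :=
  sum_le_sum fun x hx => mul_le_mul_of_nonneg_right
    (mul_le_mul_of_nonneg_right (h x hx) (Nat.cast_nonneg _))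
    (prod_nonneg fun i _ => pow_nonneg (hπ.1 i) _)

theorem IsTest.powerFn_le_one (hφ : IsTest ι n φ) (hπ : π ∈ probSimplex ι) :
    powerFn ι n φ π ≤ 1 :=
  calc powerFn ι n φ π ≤ powerFn ι n (fun x => 0 * φ x + 1) π :=
        powerFn_mono (fun x hx => by simpa using (hφ x hx).2) hπ
    _ = 1 := by rw [powerFn_mul_add_const 0 1 φ hπ, zero_mul, zero_add]

end PowerFunction

section Projection

open MvPolynomial

variable {k : ℕ}

/-- The coordinates of `liftProj k`, as polynomials of degree at most one. -/
noncomputable def liftCoord (k : ℕ) (i : Fin k) : MvPolynomial (Fin (k - 1)) ℝ :=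
  if h : (i : ℕ) < k - 1 then X ⟨i, h⟩ else 1 - ∑ j, X j

theorem totalDegree_liftCoord_le (i : Fin k) : (liftCoord k i).totalDegree ≤ 1 := by
  unfold liftCoord
  split_ifs
  · exact (totalDegree_X _).le
  · refine (totalDegree_sub _ _).trans (max_le (by simp) ?_)
    exact totalDegree_finsetSum_le fun j _ => (totalDegree_X j).le

theorem eval_aeval_liftCoord (p : MvPolynomial (Fin k) ℝ) (z : Fin (k - 1) → ℝ) :
    eval z (aeval (liftCoord k) p) = eval (liftProj k z) p := by
  rw [← aeval_eq_eval, ← aeval_eq_eval, comp_aeval_apply]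
  congr 2 with i
  unfold liftCoord liftProj
  split_ifs <;> simp

theorem eval_projPoint (p : MvPolynomial (Fin (k - 1)) ℝ) (π : Fin k → ℝ) :
    eval (projPoint k π) p = eval π (rename (Fin.castLE (Nat.sub_le k 1)) p) :=
  (eval_rename _ _ _).symm

variable [NeZero k]

theorem liftProj_mem_probSimplex {z : Fin (k - 1) → ℝ} (hz : z ∈ projSimplex k) :
    liftProj k z ∈ probSimplex (Fin k) := by
  obtain ⟨m, rfl⟩ := Nat.exists_eq_succ_of_ne_zero (NeZero.ne k)
  refine ⟨fun i => ?_, ?_⟩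
  · unfold liftProj
    split_ifs with hi
    · exact hz.1 _
    · exact sub_nonneg.2 hz.2
  · rw [Fin.sum_univ_castSucc]
    simp [liftProj]

theorem projPoint_mem_projSimplex {π : Fin k → ℝ} (hπ : π ∈ probSimplex (Fin k)) :
    projPoint k π ∈ projSimplex k := by
  obtain ⟨m, rfl⟩ := Nat.exists_eq_succ_of_ne_zero (NeZero.ne k)
  refine ⟨fun i => hπ.1 _, ?_⟩
  have hsum := hπ.2
  rw [Fin.sum_univ_castSucc] at hsum
  exact (le_add_of_nonneg_right (hπ.1 (Fin.last m))).trans_eq hsum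

theorem liftProj_projPoint {π : Fin k → ℝ} (hπ : π ∈ probSimplex (Fin k)) :
    liftProj k (projPoint k π) = π := by
  obtain ⟨m, rfl⟩ := Nat.exists_eq_succ_of_ne_zero (NeZero.ne k)
  have hsum := hπ.2
  rw [Fin.sum_univ_castSucc] at hsum
  funext i
  cases i using Fin.lastCases with
  | last => exact (dif_neg (lt_irrefl m)).trans (eq_sub_of_add_eq' hsum).symm
  | cast i => exact dif_pos i.isLt

end Projection

section Tests

open Topology

variable {ι : Type} [Fintype ι] [DecidableEq ι] {n : ℕ} {P0 : Set (ι → ℝ)} {F : (ι → ℝ) → ℝ}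
  {φ ψ : (ι → ℕ) → ℝ} {α c : ℝ}

theorem IsSUB.unbiased (hφ : IsSUB ι n P0 φ) : Unbiased ι n P0 φ :=
  fun π0 hπ0 πA hπA => (hφ π0 hπ0 πA hπA).le

theorem Unbiased.powerFn_le (hdense : probSimplex ι ⊆ closure (probSimplex ι \ P0))
    (hφ : Unbiased ι n P0 φ) {π0 π : ι → ℝ} (hπ0 : π0 ∈ P0) (hπ : π ∈ probSimplex ι) :
    powerFn ι n φ π0 ≤ powerFn ι n φ π :=
  closure_minimal (hφ π0 hπ0) (isClosed_le continuous_const (continuous_powerFn φ)) (hdense hπ)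

theorem IsUMPU.eqOn_countVecs [Nonempty ι]
    (hdense : probSimplex ι ⊆ closure (probSimplex ι \ P0)) (hφ : IsTest ι n φ)
    (hψ : IsTest ι n ψ) (hφU : IsUMPU ι n P0 α φ) (hψU : IsUMPU ι n P0 α ψ) :
    ∀ x ∈ countVecs ι n, φ x = ψ x := by
  have hpower : ∀ π ∈ probSimplex ι \ P0, powerFn ι n φ π = powerFn ι n ψ π := fun π hπ =>
    le_antisymm (hψU.2.2 φ hφ hφU.1 hφU.2.1 π hπ) (hφU.2.2 ψ hψ hψU.1 hψU.2.1 π hπ)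
  exact eqOn_countVecs_of_powerFn_eq fun π hπ =>
    closure_minimal hpower (isClosed_eq (continuous_powerFn φ) (continuous_powerFn ψ)) (hdense hπ)

theorem IsTest.mul_add_one_sub {r : ℝ} (hφ : IsTest ι n φ) (hr0 : 0 ≤ r) (hr1 : r ≤ 1) :
    IsTest ι n fun x => r * φ x + (1 - r) := fun x hx => by
  obtain ⟨h0, h1⟩ := hφ x hx
  constructor <;> nlinarith

/-- The coefficients `c > 0` for which `c * F + α` is the power function of a test of sample
size `n`. -/
def admissibleCoeffs (ι : Type) [Fintype ι] [DecidableEq ι] (n : ℕ) (F : (ι → ℝ) → ℝ) (α : ℝ) :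
    Set ℝ :=
  {c | 0 < c ∧ ∃ φ, IsTest ι n φ ∧ ∀ π ∈ probSimplex ι, powerFn ι n φ π = c * F π + α}

theorem mem_admissibleCoeffs_iff [Nonempty ι] {A : (ι → ℕ) → ℝ}
    (hA : ∀ π ∈ probSimplex ι, powerFn ι n A π = F π) :
    c ∈ admissibleCoeffs ι n F α ↔ 0 < c ∧ IsTest ι n fun x => c * A x + α := by
  have hpower : ∀ π ∈ probSimplex ι, powerFn ι n (fun x => c * A x + α) π = c * F π + α :=
    fun π hπ => by rw [powerFn_mul_add_const c α A hπ, hA π hπ]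
  refine and_congr_right fun _ => ⟨?_, fun htest => ⟨_, htest, hpower⟩⟩
  rintro ⟨φ, hφ, hφF⟩ x hx
  have heq := eqOn_countVecs_of_powerFn_eq (fun π hπ => (hφF π hπ).trans (hpower π hπ).symm) x hx
  simpa only [heq] using hφ x hx

theorem isClosed_setOf_isTest_mul_add (n : ℕ) (A : (ι → ℕ) → ℝ) (α : ℝ) :
    IsClosed {c : ℝ | IsTest ι n fun x => c * A x + α} := by
  simp only [IsTest, Set.ofPred_forall]
  refine isClosed_biInter fun x _ => ?_
  have hcont : Continuous fun c : ℝ => c * A x + α := by fun_prop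
  exact isClosed_Icc.preimage hcont

theorem eventually_isTest_mul_add (n : ℕ) (A : (ι → ℕ) → ℝ) (hα : α ∈ Set.Ioo (0 : ℝ) 1) :
    ∀ᶠ c in 𝓝 (0 : ℝ), IsTest ι n fun x => c * A x + α := by
  refine (Finset.eventually_all _).2 fun x _ => ?_
  have hcont : Continuous fun c : ℝ => c * A x + α := by fun_prop
  exact (hcont.tendsto' 0 α (by simp)).eventually (Icc_mem_nhds hα.1 hα.2)

theorem exists_isGreatest_admissibleCoeffs {A : (ι → ℕ) → ℝ}
    (hA : ∀ π ∈ probSimplex ι, powerFn ι n A π = F π) {πA : ι → ℝ} (hπA : πA ∈ probSimplex ι)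
    (hF : 0 < F πA) (hα : α ∈ Set.Ioo (0 : ℝ) 1) :
    ∃ c, IsGreatest (admissibleCoeffs ι n F α) c := by
  have : Nonempty ι := not_isEmpty_iff.1 fun _ => by simpa using hπA.2
  set T : Set ℝ := {c | IsTest ι n fun x => c * A x + α}
  have hbdd : BddAbove T := ⟨(1 - α) / F πA, fun c hc => by
    have := IsTest.powerFn_le_one hc hπA
    rw [powerFn_mul_add_const c α A hπA, hA πA hπA] at this
    exact (le_div_iff₀ hF).2 (le_sub_right_of_add_le this)⟩
  obtain ⟨c, hcT, hc⟩ : ∃ c ∈ T, 0 < c :=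
    (((eventually_isTest_mul_add n A hα).filter_mono nhdsWithin_le_nhds).and
      (self_mem_nhdsWithin (s := Set.Ioi 0))).exists
  refine ⟨sSup T, (mem_admissibleCoeffs_iff hA).2 ⟨hc.trans_le (le_csSup hbdd hcT), ?_⟩,
    fun b hb => le_csSup hbdd ((mem_admissibleCoeffs_iff hA).1 hb).2⟩
  exact (isClosed_setOf_isTest_mul_add n A α).csSup_mem ⟨c, hcT⟩ hbdd

/-- `F` is a nonnegative function cutting out the null hypothesis `P0` in the simplex which
generates the unbiased power functions of sample size `n`: `F` itself is a combination of
multinomial probabilities, and every unbiased test has power `c * F + a`. In the theorem `F` is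
the square of the generator of the vanishing ideal. -/
structure GeneratesUnbiased (ι : Type) [Fintype ι] [DecidableEq ι] (n : ℕ) (P0 : Set (ι → ℝ))
    (F : (ι → ℝ) → ℝ) : Prop where
  null_eq : P0 = {π ∈ probSimplex ι | F π = 0}
  nonneg : ∀ π ∈ probSimplex ι, 0 ≤ F π
  exists_powerFn_eq : ∃ A, ∀ π ∈ probSimplex ι, powerFn ι n A π = F π
  exists_of_unbiased : ∀ φ, Unbiased ι n P0 φ →
    ∃ c a : ℝ, ∀ π ∈ probSimplex ι, powerFn ι n φ π = c * F π + a

namespace GeneratesUnbiased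

variable (hF : GeneratesUnbiased ι n P0 F)
include hF

theorem subset_probSimplex : P0 ⊆ probSimplex ι := by
  rw [hF.null_eq]
  exact Set.sep_subset _ _

theorem eq_zero {π : ι → ℝ} (hπ : π ∈ P0) : F π = 0 := by
  rw [hF.null_eq] at hπ
  exact hπ.2

theorem pos {π : ι → ℝ} (hπ : π ∈ probSimplex ι \ P0) : 0 < F π := by
  refine (hF.nonneg π hπ.1).lt_of_ne' fun h => hπ.2 ?_
  rw [hF.null_eq]
  exact ⟨hπ.1, h⟩

theorem isSUB (hc : 0 < c) (hφ : ∀ π ∈ probSimplex ι, powerFn ι n φ π = c * F π + α) :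
    IsSUB ι n P0 φ := fun π0 hπ0 πA hπA => by
  rw [hφ π0 (hF.subset_probSimplex hπ0), hφ πA hπA.1, hF.eq_zero hπ0, mul_zero]
  gcongr
  exact mul_pos hc (hF.pos hπA)

theorem exists_nonneg_of_unbiased (hne : P0.Nonempty) (hφ : Unbiased ι n P0 φ) :
    ∃ c a : ℝ, 0 ≤ c ∧ ∀ π ∈ probSimplex ι, powerFn ι n φ π = c * F π + a := by
  obtain ⟨c, a, hca⟩ := hF.exists_of_unbiased φ hφ
  obtain ⟨π0, hπ0⟩ := hne
  by_cases hA : (probSimplex ι \ P0).Nonempty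
  · obtain ⟨πA, hπA⟩ := hA
    have hle := hφ π0 hπ0 πA hπA
    rw [hca π0 (hF.subset_probSimplex hπ0), hca πA hπA.1, hF.eq_zero hπ0, mul_zero,
      add_le_add_iff_right] at hle
    exact ⟨c, a, nonneg_of_mul_nonneg_left hle (hF.pos hπA), hca⟩
  · refine ⟨0, a, le_rfl, fun π hπ => ?_⟩
    have hπ0 : π ∈ P0 := by_contra fun h => hA ⟨π, hπ, h⟩
    rw [hca π hπ, hF.eq_zero hπ0, mul_zero, mul_zero]

theorem exists_mem_admissibleCoeffs_of_isNTUB (hne : P0.Nonempty) (hφ : IsTest ι n φ)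
    (hntub : IsNTUB ι n P0 φ) (hsize : HasSize ι n P0 α φ) :
    ∃ c ∈ admissibleCoeffs ι n F α, ∀ π ∈ probSimplex ι, powerFn ι n φ π = c * F π + α := by
  obtain ⟨hunb, π, hπ, π', hπ', hπne⟩ := hntub
  obtain ⟨c, a, hc, hca⟩ := hF.exists_nonneg_of_unbiased hne hunb
  have hc0 : c ≠ 0 := by
    rintro rfl
    exact hπne (by rw [hca π hπ, hca π' hπ', zero_mul, zero_mul])
  have ha : a = α := by
    have himage : powerFn ι n φ '' P0 = {a} := hne.image_const a ▸ Set.image_congr fun π0 hπ0 => by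
      rw [hca π0 (hF.subset_probSimplex hπ0), hF.eq_zero hπ0, mul_zero, zero_add]
    exact isLUB_singleton.unique (himage ▸ hsize)
  subst ha
  exact ⟨c, ⟨hc.lt_of_ne' hc0, φ, hφ, hca⟩, hca⟩

/-- Mixing `ψ` with the test that always rejects raises its size to exactly `α`, stays within the
family `c * F + α`, and only increases the power. -/
theorem powerFn_le_of_isGreatest (hne : P0.Nonempty) (hα : α < 1)
    (hc : IsGreatest (admissibleCoeffs ι n F α) c) (hψ : IsTest ι n ψ) (hlevel : IsLevel ι n P0 α ψ)
    (hunb : Unbiased ι n P0 ψ) {π : ι → ℝ} (hπ : π ∈ probSimplex ι) :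
    powerFn ι n ψ π ≤ c * F π + α := by
  obtain ⟨b, a, hb, hba⟩ := hF.exists_nonneg_of_unbiased hne hunb
  have haα : a ≤ α := by
    obtain ⟨π0, hπ0⟩ := hne
    simpa [hba π0 (hF.subset_probSimplex hπ0), hF.eq_zero hπ0] using hlevel π0 hπ0
  obtain ⟨r, hr0, hr1, hra⟩ : ∃ r : ℝ, 0 ≤ r ∧ r ≤ 1 ∧ r * (1 - a) = 1 - α :=
    ⟨(1 - α) / (1 - a), div_nonneg (by linarith) (by linarith),
      (div_le_one (by linarith)).2 (by linarith), div_mul_cancel₀ _ (by linarith)⟩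
  have hmix : ∀ π ∈ probSimplex ι,
      powerFn ι n (fun x => r * ψ x + (1 - r)) π = r * b * F π + α := fun π hπ => by
    rw [powerFn_mul_add_const r _ ψ hπ, hba π hπ]
    linear_combination -hra
  have hrb : r * b ≤ c := by
    rcases (mul_nonneg hr0 hb).eq_or_lt with h0 | hpos
    · exact h0 ▸ hc.1.1.le
    · exact hc.2 ⟨hpos, _, hψ.mul_add_one_sub hr0 hr1, hmix⟩
  calc powerFn ι n ψ π ≤ powerFn ι n (fun x => r * ψ x + (1 - r)) π :=
        powerFn_mono (fun x hx => by nlinarith [(hψ x hx).2]) hπ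
    _ = r * b * F π + α := hmix π hπ
    _ ≤ c * F π + α := by gcongr; exact hF.nonneg π hπ

theorem isUMPU (hne : P0.Nonempty) (hα : α < 1)
    (hc : IsGreatest (admissibleCoeffs ι n F α) c)
    (hφ : ∀ π ∈ probSimplex ι, powerFn ι n φ π = c * F π + α) : IsUMPU ι n P0 α φ := by
  refine ⟨fun π0 hπ0 => ?_, (hF.isSUB hc.1.1 hφ).unbiased, fun ψ hψ hlevel hunb πA hπA => ?_⟩
  · rw [hφ π0 (hF.subset_probSimplex hπ0), hF.eq_zero hπ0, mul_zero, zero_add]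
  · rw [hφ πA hπA.1]
    exact hF.powerFn_le_of_isGreatest hne hα hc hψ hlevel hunb hπA.1

end GeneratesUnbiased

end Tests

section PrincipalNull

open MvPolynomial

variable {k n : ℕ} {P0 : Set (Fin k → ℝ)} {Pt0 : Set (Fin (k - 1) → ℝ)}
  {f : MvPolynomial (Fin (k - 1)) ℝ}

theorem null_eq_zeroLocus_generator [NeZero k] {G : Set (MvPolynomial (Fin k) ℝ)}
    (hP0 : P0 = probSimplex (Fin k) ∩ {π | ∀ g ∈ G, eval π g = 0})
    (hPt0 : Pt0 = {π' ∈ projSimplex k | liftProj k π' ∈ P0})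
    (hprincipal : ∀ h, (∀ π' ∈ Pt0, eval π' h = 0) ↔ h ∈ Ideal.span {f}) :
    P0 = {π ∈ probSimplex (Fin k) | eval (projPoint k π) f = 0} := by
  ext π
  constructor
  · intro hπ
    have hΔ : π ∈ probSimplex (Fin k) := (hP0 ▸ hπ).1
    have hproj : projPoint k π ∈ Pt0 := by
      rw [hPt0]
      exact ⟨projPoint_mem_projSimplex hΔ, by rwa [liftProj_projPoint hΔ]⟩
    exact ⟨hΔ, (hprincipal f).2 (Ideal.mem_span_singleton_self f) _ hproj⟩
  · rintro ⟨hΔ, hf⟩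
    rw [hP0]
    refine ⟨hΔ, fun g hg => ?_⟩
    have hmem : aeval (liftCoord k) g ∈ Ideal.span {f} := (hprincipal _).1 fun z hz => by
      rw [hPt0, hP0] at hz
      rw [eval_aeval_liftCoord]
      exact hz.2.2 g hg
    obtain ⟨h, hh⟩ := Ideal.mem_span_singleton.1 hmem
    have heval := eval_aeval_liftCoord g (projPoint k π)
    rw [hh, map_mul, hf, zero_mul, liftProj_projPoint hΔ] at heval
    exact heval.symm

theorem probSimplex_subset_closure_diff
    (hnull : P0 = {π ∈ probSimplex (Fin k) | eval (projPoint k π) f = 0})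
    (hneq : P0 ≠ probSimplex (Fin k)) :
    probSimplex (Fin k) ⊆ closure (probSimplex (Fin k) \ P0) := by
  obtain ⟨w, hw, hfw⟩ : ∃ w ∈ probSimplex (Fin k), eval (projPoint k w) f ≠ 0 := by
    by_contra! h
    exact hneq (hnull.trans (Set.sep_eq_self_iff_mem_true.2 h))
  rw [eval_projPoint] at hfw
  refine (convex_subset_closure_eval_ne_zero (convex_stdSimplex ℝ (Fin k)) hw hfw).trans
    (closure_mono fun π hπ => ⟨hπ.1, fun hπ0 => hπ.2 ?_⟩)
  rw [hnull] at hπ0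
  rw [← eval_projPoint]
  exact hπ0.2

variable [NeZero k] {Z : Set (Fin (k - 1) → ℝ)}
  (hdense : probSimplex (Fin k) ⊆ closure (probSimplex (Fin k) \ P0))
  (hZ : Z ⊆ interior (projSimplex k)) (hZP0 : ∀ z ∈ Z, liftProj k z ∈ P0)
  (hideal : vanishingIdeal ℝ Z = Ideal.span {f})

include hdense hZ hZP0 hideal

theorem Unbiased.exists_powerFn_eq_sq_mul_add {φ : (Fin k → ℕ) → ℝ}
    (hφ : Unbiased (Fin k) n P0 φ) :
    ∃ g a, (f ^ 2 * g).totalDegree ≤ n ∧ ∀ π ∈ probSimplex (Fin k),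
      powerFn (Fin k) n φ π = eval (projPoint k π) (f ^ 2 * g) + a := by
  set p := aeval (liftCoord k) (powerPoly (Fin k) n φ)
  have hp (z : Fin (k - 1) → ℝ) : eval z p = powerFn (Fin k) n φ (liftProj k z) := by
    rw [eval_aeval_liftCoord, eval_powerPoly]
  have hdeg : p.totalDegree ≤ n :=
    (totalDegree_aeval_le totalDegree_liftCoord_le _).trans
      ((mul_one _).trans_le (isHomogeneous_powerPoly φ).totalDegree_le)
  have hle : ∀ z ∈ Z, ∀ y ∈ projSimplex k, eval z p ≤ eval y p := fun z hz y hy => by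
    rw [hp, hp]
    exact hφ.powerFn_le hdense (hZP0 z hz) (liftProj_mem_probSimplex hy)
  have hmin : ∀ z ∈ Z, IsLocalMin (fun y => eval y p) z := fun z hz =>
    Filter.eventually_of_mem (mem_interior_iff_mem_nhds.1 (hZ hz)) (hle z hz)
  obtain ⟨a, ha⟩ : ∃ a, ∀ z ∈ Z, eval z p = a := by
    rcases Z.eq_empty_or_nonempty with rfl | ⟨z₀, hz₀⟩
    · exact ⟨0, by simp⟩
    · exact ⟨eval z₀ p, fun z hz => le_antisymm (hle z hz z₀ (interior_subset (hZ hz₀)))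
        (hle z₀ hz₀ z (interior_subset (hZ hz)))⟩
  obtain ⟨g, hg⟩ := sq_dvd_sub_C_of_isLocalMin hideal hmin ha
  refine ⟨g, a, hg ▸ (totalDegree_sub_C_le p a).trans hdeg, fun π hπ => ?_⟩
  rw [← hg, map_sub, eval_C, sub_add_cancel, hp, liftProj_projPoint hπ]

theorem not_isNTUB_of_lt_two_mul_totalDegree (hn : n < 2 * f.totalDegree) (φ : (Fin k → ℕ) → ℝ) :
    ¬ IsNTUB (Fin k) n P0 φ := by
  rintro ⟨hunb, π, hπ, π', hπ', hne⟩
  obtain ⟨g, a, hdeg, hga⟩ := hunb.exists_powerFn_eq_sq_mul_add hdense hZ hZP0 hideal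
  have hzero : f ^ 2 * g = 0 :=
    mul_eq_zero_of_totalDegree_mul_lt (by rw [totalDegree_sq]; exact hdeg.trans_lt hn)
  exact hne (by rw [hga π hπ, hga π' hπ', hzero, map_zero, map_zero])

theorem generatesUnbiased_sq_generator
    (hnull : P0 = {π ∈ probSimplex (Fin k) | eval (projPoint k π) f = 0}) :
    GeneratesUnbiased (Fin k) (2 * f.totalDegree) P0 fun π => eval (projPoint k π) f ^ 2 where
  null_eq := by simpa only [pow_eq_zero_iff two_ne_zero] using hnull
  nonneg π _ := sq_nonneg _
  exists_powerFn_eq := by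
    have hdeg : (rename (Fin.castLE (Nat.sub_le k 1)) (f ^ 2)).totalDegree ≤ 2 * f.totalDegree :=
      (totalDegree_rename_le _ _).trans (totalDegree_sq f).le
    simpa only [← eval_projPoint, map_pow] using exists_powerFn_eq_eval hdeg
  exists_of_unbiased φ hφ := by
    obtain ⟨g, a, hdeg, hga⟩ := hφ.exists_powerFn_eq_sq_mul_add hdense hZ hZP0 hideal
    obtain ⟨c, hc⟩ := exists_mul_eq_C_mul_of_totalDegree_mul_le
      (hdeg.trans_eq (totalDegree_sq f).symm)
    exact ⟨c, a, fun π hπ => by rw [hga π hπ, hc, map_mul, eval_C, map_pow]⟩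

end PrincipalNull

theorem stmt_13_general (k : ℕ)
    (G : Set (MvPolynomial (Fin k) ℝ)) (P0 : Set (Fin k → ℝ))
    (hP0 : P0 = probSimplex (Fin k) ∩ {π | ∀ g ∈ G, MvPolynomial.eval π g = 0})
    (hne : P0.Nonempty) (hneq : P0 ≠ probSimplex (Fin k))
    (Pt0 : Set (Fin (k - 1) → ℝ))
    (hPt0 : Pt0 = {π' ∈ projSimplex k | liftProj k π' ∈ P0})
    (hdense : ∀ h : MvPolynomial (Fin (k - 1)) ℝ,
      (∀ π' ∈ interior (projSimplex k) ∩ Pt0, MvPolynomial.eval π' h = 0) →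
        ∀ π' ∈ Pt0, MvPolynomial.eval π' h = 0)
    (f : MvPolynomial (Fin (k - 1)) ℝ)
    (hprincipal : ∀ h : MvPolynomial (Fin (k - 1)) ℝ,
      (∀ π' ∈ Pt0, MvPolynomial.eval π' h = 0) ↔ h ∈ Ideal.span {f}) :
    (∀ n : ℕ, n < 2 * f.totalDegree →
      ¬ ∃ φ, IsTest (Fin k) n φ ∧ IsNTUB (Fin k) n P0 φ) ∧
    (∃ φ, IsTest (Fin k) (2 * f.totalDegree) φ ∧ IsSUB (Fin k) (2 * f.totalDegree) P0 φ) ∧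
    (∀ α : ℝ, α ∈ Set.Ioo (0 : ℝ) 1 →
      ∃ cα : ℝ,
        IsGreatest {c : ℝ | 0 < c ∧ ∃ φ, IsTest (Fin k) (2 * f.totalDegree) φ ∧
          ∀ π ∈ probSimplex (Fin k),
            powerFn (Fin k) (2 * f.totalDegree) φ π =
              c * (MvPolynomial.eval (projPoint k π) f) ^ 2 + α} cα ∧
        (∀ φ, IsTest (Fin k) (2 * f.totalDegree) φ →
          IsNTUB (Fin k) (2 * f.totalDegree) P0 φ →
          HasSize (Fin k) (2 * f.totalDegree) P0 α φ →
          ∃ c : ℝ, 0 < c ∧ c ≤ cα ∧ ∀ π ∈ probSimplex (Fin k),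
            powerFn (Fin k) (2 * f.totalDegree) φ π =
              c * (MvPolynomial.eval (projPoint k π) f) ^ 2 + α) ∧
        (∀ φ, IsTest (Fin k) (2 * f.totalDegree) φ →
          (∀ π ∈ probSimplex (Fin k),
            powerFn (Fin k) (2 * f.totalDegree) φ π =
              cα * (MvPolynomial.eval (projPoint k π) f) ^ 2 + α) →
          IsSUB (Fin k) (2 * f.totalDegree) P0 φ ∧
          IsUMPU (Fin k) (2 * f.totalDegree) P0 α φ ∧
          ∀ ψ, IsTest (Fin k) (2 * f.totalDegree) ψ →
            IsUMPU (Fin k) (2 * f.totalDegree) P0 α ψ →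
            ∀ x ∈ countVecs (Fin k) (2 * f.totalDegree), ψ x = φ x)) := by
  obtain ⟨πA, hπA⟩ : (probSimplex (Fin k) \ P0).Nonempty :=
    Set.nonempty_of_ssubset ((hP0 ▸ Set.inter_subset_left).ssubset_of_ne hneq)
  have : NeZero k := ⟨by rintro rfl; simpa using hπA.1.2⟩
  have hnull := null_eq_zeroLocus_generator hP0 hPt0 hprincipal
  have hclosure := probSimplex_subset_closure_diff hnull hneq
  have hideal := vanishingIdeal_inter_eq_span hdense hprincipal
  have hlift : ∀ z ∈ interior (projSimplex k) ∩ Pt0, liftProj k z ∈ P0 :=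
    fun z hz => (hPt0 ▸ hz.2 : z ∈ {π' ∈ projSimplex k | liftProj k π' ∈ P0}).2
  have hgen := generatesUnbiased_sq_generator hclosure Set.inter_subset_left hlift hideal hnull
  obtain ⟨A, hA⟩ := hgen.exists_powerFn_eq
  have hgreatest {α : ℝ} (hα : α ∈ Set.Ioo (0 : ℝ) 1) :=
    exists_isGreatest_admissibleCoeffs hA hπA.1 (hgen.pos hπA) hα
  refine ⟨fun n hn ⟨φ, _, hφ⟩ => not_isNTUB_of_lt_two_mul_totalDegree hclosure
    Set.inter_subset_left hlift hideal hn φ hφ, ?_, fun α hα => ?_⟩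
  · obtain ⟨c, ⟨hc, φ, hφ, hpower⟩, -⟩ := hgreatest (α := 1 / 2) (by norm_num)
    exact ⟨φ, hφ, hgen.isSUB hc hpower⟩
  · obtain ⟨cα, hcα⟩ := hgreatest hα
    refine ⟨cα, hcα, fun φ hφ hntub hsize => ?_, fun φ hφ hpower => ?_⟩
    · obtain ⟨c, hc, hpower⟩ := hgen.exists_mem_admissibleCoeffs_of_isNTUB hne hφ hntub hsize
      exact ⟨c, hc.1, hcα.2 hc, hpower⟩
    · have hφU := hgen.isUMPU hne hα.2 hcα hpower
      exact ⟨hgen.isSUB hcα.1.1 hpower, hφU, fun ψ hψ hψU => hψU.eqOn_countVecs hclosure hψ hφ hφU⟩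

/-- for a principal vanishing ideal `⟨f⟩`, the NTUB and SUB thresholds both
equal `D = 2·deg f`; and at sample size `D`, for each size α ∈ (0,1), the admissible
constants `c` form a set with a greatest element `c_α`, every size-α NTUB test has power
`c·f² + α` with `c ∈ (0, c_α]`, and the test with power `c_α·f² + α` is strictly unbiased
and is the unique UMPU level-α test. -/
theorem stmt_13 (k : ℕ) (hk : 2 ≤ k)
    (G : Set (MvPolynomial (Fin k) ℝ)) (P0 : Set (Fin k → ℝ))
    (hP0 : P0 = probSimplex (Fin k) ∩ {π | ∀ g ∈ G, MvPolynomial.eval π g = 0})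
    (hne : P0.Nonempty) (hneq : P0 ≠ probSimplex (Fin k))
    (Pt0 : Set (Fin (k - 1) → ℝ))
    (hPt0 : Pt0 = {π' ∈ projSimplex k | liftProj k π' ∈ P0})
    (hclos : closure (interior (projSimplex k) ∩ Pt0) = Pt0)
    (f : MvPolynomial (Fin (k - 1)) ℝ)
    (hprincipal : ∀ h : MvPolynomial (Fin (k - 1)) ℝ,
      (∀ π' ∈ Pt0, MvPolynomial.eval π' h = 0) ↔ h ∈ Ideal.span {f})
    (hgrad : ∀ π' ∈ Pt0, ∃ i, MvPolynomial.eval π' (MvPolynomial.pderiv i f) ≠ 0) :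
    (∀ n : ℕ, n < 2 * f.totalDegree →
      ¬ ∃ φ, IsTest (Fin k) n φ ∧ IsNTUB (Fin k) n P0 φ) ∧
    (∃ φ, IsTest (Fin k) (2 * f.totalDegree) φ ∧ IsSUB (Fin k) (2 * f.totalDegree) P0 φ) ∧
    (∀ α : ℝ, α ∈ Set.Ioo (0 : ℝ) 1 →
      ∃ cα : ℝ,
        IsGreatest {c : ℝ | 0 < c ∧ ∃ φ, IsTest (Fin k) (2 * f.totalDegree) φ ∧
          ∀ π ∈ probSimplex (Fin k),
            powerFn (Fin k) (2 * f.totalDegree) φ π =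
              c * (MvPolynomial.eval (projPoint k π) f) ^ 2 + α} cα ∧
        (∀ φ, IsTest (Fin k) (2 * f.totalDegree) φ →
          IsNTUB (Fin k) (2 * f.totalDegree) P0 φ →
          HasSize (Fin k) (2 * f.totalDegree) P0 α φ →
          ∃ c : ℝ, 0 < c ∧ c ≤ cα ∧ ∀ π ∈ probSimplex (Fin k),
            powerFn (Fin k) (2 * f.totalDegree) φ π =
              c * (MvPolynomial.eval (projPoint k π) f) ^ 2 + α) ∧
        (∀ φ, IsTest (Fin k) (2 * f.totalDegree) φ →
          (∀ π ∈ probSimplex (Fin k),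
            powerFn (Fin k) (2 * f.totalDegree) φ π =
              cα * (MvPolynomial.eval (projPoint k π) f) ^ 2 + α) →
          IsSUB (Fin k) (2 * f.totalDegree) P0 φ ∧
          IsUMPU (Fin k) (2 * f.totalDegree) P0 α φ ∧
          ∀ ψ, IsTest (Fin k) (2 * f.totalDegree) ψ →
            IsUMPU (Fin k) (2 * f.totalDegree) P0 α ψ →
            ∀ x ∈ countVecs (Fin k) (2 * f.totalDegree), ψ x = φ x)) :=
  stmt_13_general k G P0 hP0 hne hneq Pt0 hPt0
    (fun _ hh _ hz => eval_eq_zero_of_mem_closure hh (hclos.symm ▸ hz)) f hprincipal
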